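/- Let A be a unital C*-algebra and let B be a nonzero norm-closed *-subalgebra of A which is a Chebyshev subspace of A. Then exactly one of the following holds: B = A; or B = ℂ·1 (the scalar multiples of the unit of A); or there exists a *-algebra isomorphism φ : A → M₂(ℂ) (the 2×2 complex matrices) such that φ(B) is the subalgebra of diagonal matrices. -/

import Mathlib

/-!
Let `S` be a nonzero Chebyshev *-subalgebra. Were `1` at distance at least `1` from `S`, then every
`c⋆ c` with `c ∈ S` and `‖c‖ ≤ 1` would be a best approximation of `1`; hence `S` contains an
element at distance less than `1` from `1`, and a Neumann series gives `1 ∈ S`.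

If `b ∈ S` is nonzero, every `x` with `b x = 0 = x b⋆` lies in `S`: normalise `‖b‖ = 1` and put
`k = b⋆ b`. Since `1 - k` is a contraction, uniqueness of the best approximation `v` of `x` forces
`(1 - k) v (1 - k) = v`, hence `y = x - v` is orthogonal to `k`; then `‖y + ‖y‖ k‖ = ‖y‖`, and
uniqueness again gives `y = 0`.

Consequently, if some self-adjoint element of `S` has three spectral points, a partition of unity
around them writes every `x` as a sum of terms, each annihilated on both sides by a bump at one of
the three points, and `S` is everything. Otherwise all self-adjoint elements of `S` have at most two
spectral points, so `S` is `ℂ · 1` or contains a nontrivial projection `p`; in the latter case `p`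
and `1 - p` are minimal projections of `A`, and a partial isometry between them yields the matrix
units of `M₂(ℂ)`.
-/

/-- A Chebyshev set: every point has exactly one best approximation in `V`. -/
def IsChebyshev {X : Type*} [SeminormedAddCommGroup X] (V : Set X) : Prop :=
  ∀ x : X, ∃! v : X, v ∈ V ∧ ‖x - v‖ = Metric.infDist x V

namespace IsChebyshev

lemma isClosed {X : Type*} [NormedAddCommGroup X] {V : Set X} (hV : IsChebyshev V) :
    IsClosed V := by
  refine isClosed_of_closure_subset fun x hx => ?_
  obtain ⟨v, ⟨hv, hxv⟩, -⟩ := hV x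
  rw [Metric.infDist_zero_of_mem_closure hx, norm_sub_eq_zero_iff] at hxv
  exact hxv ▸ hv

lemma eq_of_norm_sub_le {X : Type*} [SeminormedAddCommGroup X] {V : Set X} (hV : IsChebyshev V)
    {x v w : X} (hv : v ∈ V) (hxv : ‖x - v‖ = Metric.infDist x V) (hw : w ∈ V)
    (hle : ‖x - w‖ ≤ ‖x - v‖) : w = v :=
  (hV x).unique
    ⟨hw, le_antisymm (hle.trans hxv.le) (dist_eq_norm x w ▸ Metric.infDist_le_dist_of_mem hw)⟩
    ⟨hv, hxv⟩

lemma mul_mul_eq_of_norm_le_one {R : Type*} [NonUnitalSeminormedRing R] {V : Set R}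
    (hV : IsChebyshev V) {f x v : R} (hf : ‖f‖ ≤ 1) (hx : f * x * f = x) (hv : v ∈ V)
    (hxv : ‖x - v‖ = Metric.infDist x V) (hfv : f * v * f ∈ V) : f * v * f = v := by
  refine hV.eq_of_norm_sub_le hv hxv hfv ?_
  calc ‖x - f * v * f‖ = ‖f * (x - v) * f‖ := by rw [mul_sub, sub_mul, hx]
    _ ≤ ‖f‖ * ‖x - v‖ * ‖f‖ := norm_mul₃_le
    _ ≤ 1 * ‖x - v‖ * 1 := by gcongr
    _ = ‖x - v‖ := by ring

end IsChebyshev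

lemma one_mem_of_norm_one_sub_lt_one {R σ : Type*} [NormedRing R] [SetLike σ R]
    [NonUnitalSubringClass σ R] {B : σ} (hB : IsClosed (B : Set R)) {b : R} (hb : b ∈ B)
    (hlt : ‖1 - b‖ < 1) : 1 ∈ B := by
  have one_sub_pow_mem (n : ℕ) : 1 - (1 - b) ^ n ∈ B := by
    induction n with
    | zero => simp
    | succ n ih =>
      have hstep : 1 - (1 - b) ^ (n + 1) = b + (1 - (1 - b) ^ n) - b * (1 - (1 - b) ^ n) := by
        rw [pow_succ']
        noncomm_ring
      rw [hstep]
      exact sub_mem (add_mem hb ih) (mul_mem hb ih)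
  have hlim := (tendsto_pow_atTop_nhds_zero_of_norm_lt_one hlt).const_sub 1
  rw [sub_zero] at hlim
  exact hB.mem_of_tendsto hlim (.of_forall one_sub_pow_mem)

lemma exists_separated_partitionOfUnity {X : Type*} [MetricSpace X] {s : Finset X}
    (hs : s.Nontrivial) :
    ∃ e u : s → C(X, ℝ), (∀ p, e p p ≠ 0) ∧ ∑ p, u p = 1 ∧ ∀ p q, p ≠ q → e p * u q = 0 := by
  obtain ⟨r, hr, hsep⟩ : ∃ r > 0, ∀ p ∈ s, ∀ q ∈ s, p ≠ q → 2 * r < dist p q := by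
    have hpos : 0 < (s : Set X).infsep := s.infsep_pos_iff_nontrivial.2 hs
    refine ⟨(s : Set X).infsep / 3, by positivity, fun p hp q hq hpq => ?_⟩
    have := Set.infsep_le_dist_of_mem (s := (s : Set X)) hp hq hpq
    linarith
  let U (p : s) : Set X := ⋂ q : s, ⋂ _ : q ≠ p, (Metric.closedBall (q : X) r)ᶜ
  have hU (p : s) : IsOpen (U p) :=
    isOpen_iInter_of_finite fun q => isOpen_iInter_of_finite fun _ =>
      Metric.isClosed_closedBall.isOpen_compl
  have hcover : Set.univ ⊆ ⋃ p, U p := fun t _ => by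
    by_cases ht : ∃ p : s, t ∈ Metric.closedBall (p : X) r
    · obtain ⟨p, hp⟩ := ht
      refine Set.mem_iUnion.2 ⟨p, Set.mem_iInter₂.2 fun q hqp hq => ?_⟩
      rw [Metric.mem_closedBall] at hp hq
      have := hsep q q.2 p p.2 (Subtype.coe_injective.ne hqp)
      linarith [dist_triangle_left (q : X) p t]
    · push Not at ht
      obtain ⟨p, hp⟩ := hs.nonempty
      exact Set.mem_iUnion.2 ⟨⟨p, hp⟩, Set.mem_iInter₂.2 fun q _ => ht q⟩
  obtain ⟨u, hu⟩ := PartitionOfUnity.exists_isSubordinate_of_locallyFinite isClosed_univ U hU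
    (locallyFinite_of_finite U) hcover
  refine ⟨fun p => ⟨fun t => max 0 (r - dist t p), by fun_prop⟩, u, fun p => ?_, ?_, ?_⟩
  · simpa using hr
  · ext t
    simpa [finsum_eq_sum_of_fintype] using u.sum_eq_one (Set.mem_univ t)
  · intro p q hpq
    ext t
    by_cases ht : t ∈ Metric.closedBall (p : X) r
    · have htU : t ∉ U q := fun h => Set.mem_iInter₂.1 h p hpq ht
      simp [image_eq_zero_of_notMem_tsupport fun h => htU (hu q h)]
    · rw [Metric.mem_closedBall, not_le] at ht
      simp [max_eq_left (sub_nonpos.2 ht.le)]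

section CStarAlgebra

variable {A : Type*} [CStarAlgebra A]

lemma star_mul_self_le_one [PartialOrder A] [StarOrderedRing A] {c : A} (hc : ‖c‖ ≤ 1) :
    star c * c ≤ 1 := by
  rw [← CStarAlgebra.norm_le_one_iff_of_nonneg _ (star_mul_self_nonneg c),
    CStarRing.norm_star_mul_self]
  exact mul_le_one₀ hc (norm_nonneg c) hc

lemma norm_one_sub_star_mul_self_le {c : A} (hc : ‖c‖ ≤ 1) : ‖1 - star c * c‖ ≤ 1 := by
  let _ := CStarAlgebra.spectralOrder A
  have := CStarAlgebra.spectralOrderedRing A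
  rw [CStarAlgebra.norm_le_one_iff_of_nonneg _ (sub_nonneg.2 (star_mul_self_le_one hc))]
  exact sub_le_self _ (star_mul_self_nonneg c)

lemma norm_add_eq_max_of_star_mul_eq_zero {y z : A} (hl : star y * z = 0) (hr : y * star z = 0) :
    ‖y + z‖ = max ‖y‖ ‖z‖ := by
  have hl' : star z * y = 0 := by simpa using congrArg star hl
  have hexpand : star (y + z) * (y + z) = star y * y + star z * z := by
    rw [star_add, add_mul, mul_add, mul_add, hl, hl', add_zero, zero_add]
  have horth : star y * y * (star z * z) = 0 := by
    rw [mul_assoc, ← mul_assoc y, hr, zero_mul, mul_zero]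
  have hnorm := (IsSelfAdjoint.star_mul_self y).norm_add_eq_max (.star_mul_self z) horth
  rw [← hexpand, CStarRing.norm_star_mul_self, CStarRing.norm_star_mul_self,
    CStarRing.norm_star_mul_self] at hnorm
  rw [← mul_self_inj (norm_nonneg _) (le_max_of_le_left (norm_nonneg _)), hnorm]
  rcases le_total ‖y‖ ‖z‖ with h | h <;> simp [h, mul_self_le_mul_self]

lemma mul_eq_zero_of_one_sub_conj_eq {c y : A} (hc : ‖c‖ ≤ 1)
    (hy : (1 - star c * c) * y * (1 - star c * c) = y) : c * y = 0 := by
  let _ := CStarAlgebra.spectralOrder A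
  have := CStarAlgebra.spectralOrderedRing A
  set k := star c * c with hk
  have hk0 : 0 ≤ k := star_mul_self_nonneg c
  have hk1 : k ≤ 1 := star_mul_self_le_one hc
  have hb : 0 ≤ star y * (1 - k) * y := star_left_conjugate_nonneg (sub_nonneg.2 hk1) y
  -- The positive element `(c y)⋆ (c y)` is also minus a product of two commuting positive elements.
  have hprod : star y * (1 - k) * y * k = -(star (c * y) * (c * y)) := by
    calc star y * (1 - k) * y * k
        = star y * ((1 - k) * y) - star y * ((1 - k) * y * (1 - k)) := by noncomm_ring
      _ = -(star y * k * y) := by rw [hy]; noncomm_ring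
      _ = -(star (c * y) * (c * y)) := by rw [hk, star_mul]; noncomm_ring
  have hcomm : Commute (star y * (1 - k) * y) k :=
    (IsSelfAdjoint.commute_iff (.of_nonneg hb) (.of_nonneg hk0)).2
      (hprod ▸ (IsSelfAdjoint.star_mul_self (c * y)).neg)
  have hnonpos : star (c * y) * (c * y) ≤ 0 := neg_nonneg.1 (hprod ▸ hcomm.mul_nonneg hb hk0)
  exact (CStarRing.star_mul_self_eq_zero_iff _).1
    (le_antisymm hnonpos (star_mul_self_nonneg _))

section Class

variable {σ : Type*} [SetLike σ A] [NonUnitalSubringClass σ A] [SMulMemClass σ ℂ A]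
  {B : σ}

lemma IsChebyshev.eq_of_sub_orthogonal (hB : IsChebyshev (B : Set A)) {x v z : A} (hv : v ∈ B)
    (hmin : ‖x - v‖ = Metric.infDist x B) (hz : z ∈ B) (hz0 : z ≠ 0)
    (hl : star (x - v) * z = 0) (hr : (x - v) * star z = 0) : x = v := by
  let w : A := (‖x - v‖ : ℂ) • (‖z‖⁻¹ : ℂ) • z
  have hw : ‖w‖ = ‖x - v‖ := by
    rw [norm_smul, Complex.norm_real, norm_norm]
    exact (congrArg _ (norm_smul_inv_norm hz0)).trans (mul_one _)
  have hwB : w ∈ B := SMulMemClass.smul_mem _ (SMulMemClass.smul_mem _ hz)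
  have hnorm : ‖x - v + w‖ = ‖x - v‖ := by
    rw [norm_add_eq_max_of_star_mul_eq_zero, hw, max_self]
    · rw [mul_smul_comm, mul_smul_comm, hl, smul_zero, smul_zero]
    · rw [star_smul, star_smul, mul_smul_comm, mul_smul_comm, hr, smul_zero, smul_zero]
  have hvw : v - w = v :=
    hB.eq_of_norm_sub_le hv hmin (sub_mem hv hwB) (by rw [← sub_add, hnorm])
  rw [← sub_eq_zero, ← norm_eq_zero, ← hw, sub_eq_self.1 hvw, norm_zero]

variable [StarMemClass σ A]

protected theorem IsChebyshev.one_mem (hB : IsChebyshev (B : Set A)) {b : A} (hb : b ∈ B)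
    (hb0 : b ≠ 0) : 1 ∈ B := by
  obtain ⟨v, ⟨hv, hmin⟩, -⟩ := hB 1
  refine one_mem_of_norm_one_sub_lt_one hB.isClosed hv ?_
  by_contra! hge
  have eq_of_norm_le {c : A} (hc : c ∈ B) (hc1 : ‖c‖ ≤ 1) : star c * c = v :=
    hB.eq_of_norm_sub_le hv hmin (mul_mem (star_mem hc) hc)
      ((norm_one_sub_star_mul_self_le hc1).trans hge)
  let c : A := (‖b‖⁻¹ : ℂ) • b
  have hc1 : ‖c‖ = 1 := norm_smul_inv_norm hb0
  have hcc : star c * c = star 0 * 0 :=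
    (eq_of_norm_le (SMulMemClass.smul_mem _ hb) hc1.le).trans
      (eq_of_norm_le (zero_mem B) (by simp)).symm
  rw [mul_zero, CStarRing.star_mul_self_eq_zero_iff] at hcc
  simp [hcc] at hc1

theorem IsChebyshev.mem_of_mul_eq_zero (hB : IsChebyshev (B : Set A)) {b x : A} (hb : b ∈ B)
    (hb0 : b ≠ 0) (hbx : b * x = 0) (hxb : x * star b = 0) : x ∈ B := by
  obtain ⟨c, hcB, hc1, hcx, hxc⟩ : ∃ c ∈ B, ‖c‖ = 1 ∧ c * x = 0 ∧ x * star c = 0 :=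
    ⟨(‖b‖⁻¹ : ℂ) • b, SMulMemClass.smul_mem _ hb, norm_smul_inv_norm hb0,
      by rw [smul_mul_assoc, hbx, smul_zero], by rw [star_smul, mul_smul_comm, hxb, smul_zero]⟩
  set k := star c * c with hk
  have hkB : k ∈ B := mul_mem (star_mem hcB) hcB
  have hk0 : k ≠ 0 := by
    rw [← norm_ne_zero_iff, hk, CStarRing.norm_star_mul_self, hc1, one_mul]
    exact one_ne_zero
  have hx : (1 - k) * x * (1 - k) = x := by
    have hkx : k * x = 0 := by rw [hk, mul_assoc, hcx, mul_zero]
    have hxk : x * k = 0 := by rw [hk, ← mul_assoc, hxc, zero_mul]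
    rw [sub_mul, hkx, one_mul, sub_zero, mul_sub, hxk, mul_one, sub_zero]
  obtain ⟨v, ⟨hv, hmin⟩, -⟩ := hB x
  have hconj : (1 - k) * v * (1 - k) = v := by
    refine hB.mul_mul_eq_of_norm_le_one (norm_one_sub_star_mul_self_le hc1.le) hx hv hmin ?_
    rw [show (1 - k) * v * (1 - k) = v - k * v - v * k + k * v * k by noncomm_ring]
    exact add_mem (sub_mem (sub_mem hv (mul_mem hkB hv)) (mul_mem hv hkB))
      (mul_mem (mul_mem hkB hv) hkB)
  have hfy : (1 - k) * (x - v) * (1 - k) = x - v := by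
    rw [mul_sub (1 - k), sub_mul _ _ (1 - k), hx, hconj]
  have hfy' : (1 - k) * star (x - v) * (1 - k) = star (x - v) := by
    simpa only [hk, star_mul, star_sub, star_one, star_star, mul_assoc] using congrArg star hfy
  have hcy : star (x - v) * star c = 0 := by
    rw [← star_mul, mul_eq_zero_of_one_sub_conj_eq hc1.le hfy, star_zero]
  have hyc : (x - v) * star c = 0 := by
    rw [← star_star (x - v), ← star_mul, mul_eq_zero_of_one_sub_conj_eq hc1.le hfy', star_zero]
  have hxv : x = v := by
    refine hB.eq_of_sub_orthogonal hv hmin hkB hk0 ?_ ?_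
    · rw [hk, ← mul_assoc, hcy, zero_mul]
    · rw [hk, star_mul, star_star, ← mul_assoc, hyc, zero_mul]
  exact hxv ▸ hv

end Class

section Spectrum

variable {S : StarSubalgebra ℂ A}

lemma IsChebyshev.eq_top_of_two_lt_card_spectrum (hS : IsChebyshev (S : Set A)) {h : A}
    (hh : h ∈ S) (hsa : IsSelfAdjoint h) {s : Finset ℝ} (hs : (s : Set ℝ) ⊆ spectrum ℝ h)
    (hcard : 2 < s.card) : S = ⊤ := by
  have : IsClosed (S : Set A) := hS.isClosed
  obtain ⟨e, u, he, hu, heu⟩ := exists_separated_partitionOfUnity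
    (Finset.one_lt_card_iff_nontrivial.1 (one_lt_two.trans hcard))
  have hsum : ∑ p, cfc (u p) h = 1 := by
    rw [← cfc_sum_univ (fun p => ⇑(u p)) h, ← cfc_one ℝ h, ← ContinuousMap.coe_one, ← hu,
      ContinuousMap.coe_sum]
  have hne (p : s) : cfc (e p) h ≠ 0 := fun h0 => by
    have := norm_apply_le_norm_cfc (e p) h (hs p.2)
    rw [h0, norm_zero, norm_le_zero_iff] at this
    exact he p this
  have horth {p q : s} (hpq : p ≠ q) : cfc (e p) h * cfc (u q) h = 0 := by
    rw [← cfc_mul (e p) (u q) h, ← cfc_zero ℝ h]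
    exact congrArg (cfc · h) (congrArg DFunLike.coe (heu p q hpq))
  refine eq_top_iff.2 fun x _ => ?_
  have hx : x = ∑ p, ∑ q, cfc (u p) h * x * cfc (u q) h := by
    simp_rw [← Finset.mul_sum, ← Finset.sum_mul, hsum, one_mul, mul_one]
  rw [hx]
  refine sum_mem fun p _ => sum_mem fun q _ => ?_
  obtain ⟨k, -, hk⟩ : ∃ k ∈ (Finset.univ : Finset s), k ∉ ({p, q} : Finset s) :=
    Finset.exists_mem_notMem_of_card_lt_card (Finset.card_le_two.trans_lt (by simpa using hcard))
  simp only [Finset.mem_insert, Finset.mem_singleton, not_or] at hk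
  refine hS.mem_of_mul_eq_zero (cfc_mem (𝕜' := ℂ) (e k) hh) (hne k) ?_ ?_
  · rw [← mul_assoc, ← mul_assoc, horth hk.1, zero_mul, zero_mul]
  · rw [(cfc_predicate (e k) h).star_eq, mul_assoc, (cfc_commute_cfc (u q) (e k) h).eq,
      horth hk.2, mul_zero]

lemma IsChebyshev.exists_spectrum_subset_pair (hS : IsChebyshev (S : Set A)) (hne : S ≠ ⊤) {h : A}
    (hh : h ∈ S) (hsa : IsSelfAdjoint h) : ∃ a b : ℝ, spectrum ℝ h ⊆ {a, b} := by
  by_contra! hcon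
  simp only [Set.not_subset, Set.mem_insert_iff, Set.mem_singleton_iff, not_or] at hcon
  obtain ⟨a, ha, -⟩ := hcon 0 0
  obtain ⟨b, hb, hba, -⟩ := hcon a a
  obtain ⟨c, hc, hca, hcb⟩ := hcon a b
  refine hne (hS.eq_top_of_two_lt_card_spectrum hh hsa (s := {a, b, c}) ?_ ?_)
  · simp [Set.insert_subset_iff, ha, hb, hc]
  · rw [Finset.card_eq_three.2 ⟨a, b, c, Ne.symm hba, Ne.symm hca, Ne.symm hcb, rfl⟩]
    simp

lemma sub_mul_sub_eq_zero_of_spectrum_subset_pair {h : A} (hsa : IsSelfAdjoint h) {a b : ℝ}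
    (hspec : spectrum ℝ h ⊆ {a, b}) : (h - algebraMap ℝ A a) * (h - algebraMap ℝ A b) = 0 := by
  have hsub (r : ℝ) : h - algebraMap ℝ A r = cfc (fun t => t - r) h := by
    rw [cfc_sub _ _ h, cfc_id' ℝ h, cfc_const r h]
  rw [hsub, hsub, ← cfc_mul _ _ h, ← cfc_const_zero ℝ h]
  refine cfc_congr fun t ht => ?_
  rcases hspec ht with rfl | rfl <;> simp

-- For `a = b` the division below yields `0`, which is the projection wanted in that case.
lemma exists_isStarProjection_of_spectrum_subset_pair (hS : IsClosed (S : Set A)) {h : A}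
    (hh : h ∈ S) (hsa : IsSelfAdjoint h) {a b : ℝ} (hspec : spectrum ℝ h ⊆ {a, b}) :
    ∃ p ∈ S, IsStarProjection p ∧ h = algebraMap ℝ A a + (b - a) • p := by
  refine ⟨cfc (fun t => (t - a) / (b - a)) h, cfc_mem (𝕜' := ℂ) _ hh, ⟨?_, cfc_predicate _ h⟩, ?_⟩
  · rw [IsIdempotentElem, ← cfc_mul _ _ h]
    refine cfc_congr fun t ht => ?_
    rcases hspec ht with rfl | rfl
    · simp
    · by_cases hab : t - a = 0 <;> simp [hab]
  · rw [← cfc_smul _ _ h, ← cfc_const_add _ _ h]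
    conv_lhs => rw [← cfc_id' ℝ h]
    refine cfc_congr fun t ht => ?_
    rcases hspec ht with rfl | rfl
    · simp
    · by_cases hab : t - a = 0
      · simpa [hab] using sub_eq_zero.1 hab
      · simp [mul_div_cancel₀ _ hab]

end Spectrum

section MinimalProjection

/-- A minimal projection: a nonzero self-adjoint idempotent `p` with corner `p A p = ℂ p`. -/
structure IsMinimalProjection {R : Type*} [Ring R] [StarRing R] [Algebra ℂ R] (p : R) : Prop
    extends IsStarProjection p where
  ne_zero : p ≠ 0
  exists_smul_eq : ∀ x, ∃ c : ℂ, p * x * p = c • p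

variable {S : StarSubalgebra ℂ A}

lemma mem_of_forall_isSelfAdjoint {R : Type*} [AddCommGroup R] [Module ℂ R] [StarAddMonoid R]
    [StarModule ℂ R] {V : Submodule ℂ R} (hV : ∀ x : R, IsSelfAdjoint x → x ∈ V) (x : R) :
    x ∈ V := by
  rw [← realPart_add_I_smul_imaginaryPart x]
  exact V.add_mem (hV _ (realPart x).2) (V.smul_mem _ (hV _ (imaginaryPart x).2))

lemma IsChebyshev.corner_mem (hS : IsChebyshev (S : Set A)) {p : A} (hpS : p ∈ S)
    (hp : IsStarProjection p) (hp1 : p ≠ 1) (x : A) : p * x * p ∈ S := by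
  refine hS.mem_of_mul_eq_zero (sub_mem (one_mem S) hpS) (sub_ne_zero.2 hp1.symm) ?_ ?_
  · rw [← mul_assoc, ← mul_assoc, hp.one_sub_mul_self, zero_mul, zero_mul]
  · rw [hp.one_sub.isSelfAdjoint.star_eq, mul_assoc, hp.mul_one_sub_self, mul_zero]

lemma mem_spectrum_add_smul_one_sub {K R : Type*} [CommRing K] [Ring R] [Algebra K R] {p k : R}
    (hp : IsIdempotentElem p) (hp1 : p ≠ 1) (hpk : p * k = k) (r : K) :
    r ∈ spectrum K (k + r • (1 - p)) := fun hunit => by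
  refine hp1 (sub_eq_zero.1 (hunit.mul_left_eq_zero.1 ?_)).symm
  have hqk : (1 - p) * k = 0 := by rw [sub_mul, one_mul, hpk, sub_self]
  rw [Algebra.algebraMap_eq_smul_one, mul_sub, mul_add, hqk, mul_smul_comm, mul_smul_comm,
    hp.one_sub.eq, mul_one, zero_add, sub_self]

lemma IsChebyshev.exists_smul_eq_of_mem_corner (hS : IsChebyshev (S : Set A)) (hne : S ≠ ⊤)
    {p k : A} (hpS : p ∈ S) (hp : IsStarProjection p) (hp1 : p ≠ 1) (hkS : k ∈ S)
    (hk : IsSelfAdjoint k) (hpk : p * k = k) : ∃ c : ℝ, k = c • p := by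
  have hkp : k * p = k := by
    simpa only [star_mul, hk.star_eq, hp.isSelfAdjoint.star_eq] using congrArg star hpk
  obtain ⟨M, hM⟩ : ∃ M : ℝ, M ∈ resolventSet ℝ k :=
    ⟨‖k‖ * ‖(1 : A)‖ + 1, spectrum.mem_resolventSet_of_norm_lt_mul
      (by rw [Real.norm_of_nonneg (by positivity)]; exact lt_add_one _)⟩
  -- Adding `M (1 - p)` puts the point `M`, which is not a spectral point of `k`, into the spectrum.
  set h := k + M • (1 - p) with hh
  have hhS : h ∈ S := add_mem hkS
    (by rw [← Complex.coe_smul]; exact S.smul_mem (sub_mem (one_mem S) hpS) _)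
  have hhsa : IsSelfAdjoint h := hk.add (.smul (.all M) hp.one_sub.isSelfAdjoint)
  have hhp : h * p = k := by
    rw [hh, add_mul, smul_mul_assoc, hp.one_sub_mul_self, smul_zero, add_zero, hkp]
  have hMh : M ∈ spectrum ℝ h := mem_spectrum_add_smul_one_sub hp.isIdempotentElem hp1 hpk M
  obtain ⟨c, hspec⟩ : ∃ c : ℝ, spectrum ℝ h ⊆ {M, c} := by
    obtain ⟨a, b, hab⟩ := hS.exists_spectrum_subset_pair hne hhS hhsa
    rcases hab hMh with rfl | rfl
    exacts [⟨b, hab⟩, ⟨a, Set.pair_comm a _ ▸ hab⟩]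
  refine ⟨c, sub_eq_zero.1 ?_⟩
  have hpkc : p * (k - c • p) = k - c • p := by
    rw [mul_sub, hpk, mul_smul_comm, hp.isIdempotentElem.eq]
  have hkc : (h - algebraMap ℝ A c) * p = k - c • p := by
    rw [sub_mul, hhp, ← Algebra.smul_def]
  have hzero : (k - algebraMap ℝ A M) * (k - c • p) = 0 :=
    calc (k - algebraMap ℝ A M) * (k - c • p)
        = (h - algebraMap ℝ A M) * p * (k - c • p) := by
          rw [sub_mul h, hhp, ← hkp, ← sub_mul, mul_assoc, hkp, hpkc]
      _ = (h - algebraMap ℝ A M) * (h - algebraMap ℝ A c) * p := by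
          rw [mul_assoc, hpkc, mul_assoc, hkc]
      _ = 0 := by rw [sub_mul_sub_eq_zero_of_spectrum_subset_pair hhsa hspec, zero_mul]
  exact (IsUnit.sub_iff.1 hM).mul_right_eq_zero.1 hzero

theorem IsChebyshev.isMinimalProjection (hS : IsChebyshev (S : Set A)) (hne : S ≠ ⊤) {p : A}
    (hpS : p ∈ S) (hp : IsStarProjection p) (hp0 : p ≠ 0) (hp1 : p ≠ 1) :
    IsMinimalProjection p where
  toIsStarProjection := hp
  ne_zero := hp0
  exists_smul_eq x := by
    let V : Submodule ℂ A :=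
      (ℂ ∙ p).comap (LinearMap.mulRight ℂ p ∘ₗ LinearMap.mulLeft ℂ p)
    suffices hx : x ∈ V by
      obtain ⟨c, hc⟩ := Submodule.mem_span_singleton.1 hx
      exact ⟨c, hc.symm⟩
    refine mem_of_forall_isSelfAdjoint (fun y hy => ?_) x
    obtain ⟨c, hc⟩ := hS.exists_smul_eq_of_mem_corner hne hpS hp hp1 (hS.corner_mem hpS hp hp1 y)
      (hy.conjugate_self hp.isSelfAdjoint)
      (by rw [← mul_assoc, ← mul_assoc, hp.isIdempotentElem.eq])
    exact Submodule.mem_span_singleton.2 ⟨c, (Complex.coe_smul c p).trans hc.symm⟩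

lemma IsChebyshev.exists_isStarProjection_ne_zero_ne_one (hS : IsChebyshev (S : Set A))
    (htop : S ≠ ⊤) (hbot : S ≠ ⊥) : ∃ p ∈ S, IsStarProjection p ∧ p ≠ 0 ∧ p ≠ 1 := by
  by_contra! hcon
  refine hbot (eq_bot_iff.2 fun x hx => ?_)
  let V : Submodule ℂ S := (⊥ : StarSubalgebra ℂ A).toSubalgebra.toSubmodule.comap
    S.subtype.toLinearMap
  refine mem_of_forall_isSelfAdjoint (V := V) (fun h hh => ?_) ⟨x, hx⟩
  have hsa : IsSelfAdjoint (h : A) := hh.map S.subtype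
  obtain ⟨a, b, hspec⟩ := hS.exists_spectrum_subset_pair htop h.2 hsa
  obtain ⟨p, hpS, hp, hhp⟩ :=
    exists_isStarProjection_of_spectrum_subset_pair hS.isClosed h.2 hsa hspec
  obtain ⟨c, hc⟩ : ∃ c : ℝ, (h : A) = algebraMap ℝ A c := by
    by_cases hp0 : p = 0
    · exact ⟨a, by rw [hhp, hp0, smul_zero, add_zero]⟩
    · refine ⟨b, ?_⟩
      rw [hhp, hcon p hpS hp hp0, ← Algebra.algebraMap_eq_smul_one, ← map_add, add_sub_cancel]
  change (h : A) ∈ (⊥ : StarSubalgebra ℂ A)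
  rw [hc, IsScalarTower.algebraMap_apply ℝ ℂ A]
  exact algebraMap_mem _ _

lemma eq_sq_norm_of_mul_star_eq_smul {e y : A} (he : IsStarProjection e) (he0 : e ≠ 0) {c : ℂ}
    (hy : y * star y = c • e) : c = (‖y‖ ^ 2 : ℝ) := by
  let _ := CStarAlgebra.spectralOrder A
  have := CStarAlgebra.spectralOrderedRing A
  open scoped ComplexOrder in
  have hc0 : 0 ≤ c := by
    refine spectrum_nonneg_of_nonneg (mul_star_self_nonneg y) fun hunit => he0 ?_
    refine hunit.mul_right_eq_zero.1 ?_
    rw [hy, sub_mul, ← Algebra.smul_def, smul_mul_assoc, he.isIdempotentElem.eq, sub_self]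
  have he1 : ‖e‖ = 1 := by
    have := CStarRing.norm_star_mul_self (x := e)
    rw [he.isSelfAdjoint.star_eq, he.isIdempotentElem.eq] at this
    exact (mul_eq_left₀ (norm_ne_zero_iff.2 he0)).1 this.symm
  have hnorm : ‖c‖ = ‖y‖ ^ 2 := by
    rw [sq, ← CStarRing.norm_self_mul_star, hy, norm_smul, he1, mul_one]
  rw [← hnorm]
  exact Complex.eq_coe_norm_of_nonneg hc0

lemma IsMinimalProjection.mul_star_eq_smul {p u : A} (hp : IsMinimalProjection p)
    (hu : p * u = u) : u * star u = ‖u‖ ^ 2 • p := by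
  obtain ⟨c, hc⟩ := hp.exists_smul_eq (u * star u)
  have hsu : star u * p = star u := by
    rw [← hp.isSelfAdjoint.star_eq, ← star_mul, hu]
  rw [← mul_assoc, hu, mul_assoc, hsu] at hc
  rw [hc, eq_sq_norm_of_mul_star_eq_smul hp.toIsStarProjection hp.ne_zero hc, Complex.coe_smul]

lemma IsMinimalProjection.exists_mul_star_eq {p q w : A} (hp : IsMinimalProjection p)
    (hq : IsMinimalProjection q) (hw : p * w * q ≠ 0) :
    ∃ v, v * star v = p ∧ star v * v = q := by
  set u := p * w * q with hu
  have hpu : p * u = u := by rw [hu, ← mul_assoc, ← mul_assoc, hp.isIdempotentElem.eq]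
  have hqu : q * star u = star u := by
    rw [← hq.isSelfAdjoint.star_eq, ← star_mul, hu, mul_assoc, hq.isIdempotentElem.eq]
  have hsuu : star u * u = ‖u‖ ^ 2 • q := by simpa using hq.mul_star_eq_smul hqu
  have hscale : ‖u‖⁻¹ * ‖u‖⁻¹ * ‖u‖ ^ 2 = 1 := by
    rw [← sq, ← mul_pow, inv_mul_cancel₀ (norm_ne_zero_iff.2 hw), one_pow]
  refine ⟨‖u‖⁻¹ • u, ?_, ?_⟩ <;> rw [star_smul, star_trivial, smul_mul_smul_comm]
  · rw [hp.mul_star_eq_smul hpu, smul_smul, hscale, one_smul]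
  · rw [hsuu, smul_smul, hscale, one_smul]

end MinimalProjection

end CStarAlgebra

section MatrixUnits

open Matrix

lemma mul_star_mul_self_of_mul_self_eq_zero {R : Type*} [Semiring R] [StarRing R] {v : R}
    (hv : v * v = 0) (hvv : v * star v + star v * v = 1) : v * star v * v = v := by
  rw [mul_assoc]
  simpa [mul_add, ← mul_assoc v v, hv] using congrArg (v * ·) hvv

section MatrixUnitsHom

variable {K R : Type*} [CommSemiring K] [StarRing K] [Semiring R] [StarRing R] [Algebra K R]
  [StarModule K R]

/-- The star homomorphism out of the `2 × 2` matrices determined by a square-zero element `v` with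
`v v⋆ + v⋆ v = 1`: it sends the matrix units `e₀₀, e₀₁, e₁₀, e₁₁` to `v v⋆, v, v⋆, v⋆ v`. -/
def matrixUnitsHom (v : R) (hv : v * v = 0) (hvv : v * star v + star v * v = 1) :
    Matrix (Fin 2) (Fin 2) K →⋆ₐ[K] R where
  toFun m := m 0 0 • (v * star v) + m 0 1 • v + m 1 0 • star v + m 1 1 • (star v * v)
  map_one' := by simp [hvv]
  map_zero' := by simp
  map_add' m n := by simp only [Matrix.add_apply, add_smul]; abel
  map_mul' m n := by
    have hvsv := mul_star_mul_self_of_mul_self_eq_zero hv hvv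
    have hsvs : star v * v * star v = star v := by simpa [mul_assoc] using congrArg star hvsv
    have hss : star v * star v = 0 := by rw [← star_mul, hv, star_zero]
    have hvss : v * star v * star v = 0 := by rw [mul_assoc, hss, mul_zero]
    have hsvv : star v * v * v = 0 := by rw [mul_assoc, hv, mul_zero]
    simp only [Matrix.mul_apply, Fin.sum_univ_two, add_smul, mul_add, add_mul, smul_mul_smul_comm,
      ← mul_assoc, hv, hss, hvsv, hsvs, hvss, hsvv, zero_mul, smul_zero, add_zero]
    abel
  commutes' r := by
    simp [Matrix.algebraMap_matrix_apply, ← smul_add, hvv, Algebra.algebraMap_eq_smul_one]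
  map_star' m := by
    simp only [Matrix.star_apply, star_add, star_smul, star_mul, star_star]
    abel

variable {v : R} (hv : v * v = 0) (hvv : v * star v + star v * v = 1)

lemma matrixUnitsHom_apply (m : Matrix (Fin 2) (Fin 2) K) :
    matrixUnitsHom v hv hvv m =
      m 0 0 • (v * star v) + m 0 1 • v + m 1 0 • star v + m 1 1 • (star v * v) :=
  rfl

lemma matrixUnitsHom_single_zero_zero :
    matrixUnitsHom v hv hvv (single 0 0 (1 : K)) = v * star v := by
  simp [matrixUnitsHom_apply]

lemma matrixUnitsHom_surjective
    (hmin : ∀ x, ∃ c : K, v * star v * x * (v * star v) = c • (v * star v)) :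
    Function.Surjective (matrixUnitsHom (K := K) v hv hvv) := by
  intro x
  have hvsv := mul_star_mul_self_of_mul_self_eq_zero hv hvv
  have hsvs : star v * (v * star v) = star v := by simpa [mul_assoc] using congrArg star hvsv
  obtain ⟨a, ha⟩ := hmin x
  obtain ⟨b, hb⟩ := hmin (x * star v)
  obtain ⟨c, hc⟩ := hmin (v * x)
  obtain ⟨d, hd⟩ := hmin (v * x * star v)
  have hb' : v * star v * x * (star v * v) = b • v := by
    calc v * star v * x * (star v * v)
        = v * star v * (x * star v) * (v * star v) * v := by
          rw [mul_assoc _ _ v, hvsv]; simp only [mul_assoc]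
      _ = b • v := by rw [hb, smul_mul_assoc, hvsv]
  have hc' : star v * v * x * (v * star v) = c • star v := by
    calc star v * v * x * (v * star v)
        = star v * (v * star v * (v * x) * (v * star v)) := by
          rw [← mul_assoc (star v), ← mul_assoc (star v), hsvs, mul_assoc (star v) v x]
      _ = c • star v := by rw [hc, mul_smul_comm, hsvs]
  have hd' : star v * v * x * (star v * v) = d • (star v * v) := by
    calc star v * v * x * (star v * v)
        = star v * (v * star v * (v * x * star v) * (v * star v)) * v := by
          rw [← mul_assoc (star v), ← mul_assoc (star v), hsvs, mul_assoc _ _ v, hvsv]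
          simp only [mul_assoc]
      _ = d • (star v * v) := by rw [hd, mul_smul_comm, smul_mul_assoc, hsvs]
  refine ⟨!![a, b; c, d], ?_⟩
  calc matrixUnitsHom v hv hvv !![a, b; c, d]
      = (v * star v + star v * v) * x * (v * star v + star v * v) := by
        rw [add_mul, add_mul, mul_add, mul_add, ha, hb', hc', hd', matrixUnitsHom_apply]
        simp [add_assoc]
    _ = x := by rw [hvv, one_mul, mul_one]

end MatrixUnitsHom

lemma matrixUnitsHom_bijective {K R : Type*} [Field K] [StarRing K] [Ring R] [Nontrivial R]
    [StarRing R] [Algebra K R] [StarModule K R] {v : R} (hv : v * v = 0)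
    (hvv : v * star v + star v * v = 1)
    (hmin : ∀ x, ∃ c : K, v * star v * x * (v * star v) = c • (v * star v)) :
    Function.Bijective (matrixUnitsHom (K := K) v hv hvv) :=
  ⟨(matrixUnitsHom (K := K) v hv hvv).toAlgHom.toRingHom.injective,
    matrixUnitsHom_surjective hv hvv hmin⟩

lemma mem_iff_isDiag_of_ne_top {K : Type*} [Field K] [StarRing K]
    {T : StarSubalgebra K (Matrix (Fin 2) (Fin 2) K)} (h00 : single 0 0 1 ∈ T) (hT : T ≠ ⊤)
    (m : Matrix (Fin 2) (Fin 2) K) : m ∈ T ↔ m.IsDiag := by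
  have h11 : single 1 1 1 ∈ T := by
    have : single 1 1 1 = (1 : Matrix (Fin 2) (Fin 2) K) - single 0 0 1 := by
      ext i j; fin_cases i <;> fin_cases j <;> simp
    exact this ▸ sub_mem (one_mem T) h00
  have eq_sum (y : Matrix (Fin 2) (Fin 2) K) : y = y 0 0 • single 0 0 1 + y 0 1 • single 0 1 1 +
      y 1 0 • single 1 0 1 + y 1 1 • single 1 1 1 := by
    ext i j; fin_cases i <;> fin_cases j <;> simp
  have upper_eq_zero {x : Matrix (Fin 2) (Fin 2) K} (hx : x ∈ T) : x 0 1 = 0 := by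
    by_contra h0
    have h01 : single 0 1 1 ∈ T := by
      have : single 0 1 1 = (x 0 1)⁻¹ • (single 0 0 1 * x * single 1 1 1) := by
        ext i j; fin_cases i <;> fin_cases j <;> simp [h0]
      exact this ▸ T.smul_mem (mul_mem (mul_mem h00 hx) h11) _
    have h10 : single 1 0 1 ∈ T := by
      have : single 1 0 1 = star (single 0 1 1 : Matrix (Fin 2) (Fin 2) K) := by
        simp [star_eq_conjTranspose]
      exact this ▸ star_mem h01
    refine hT (eq_top_iff.2 fun y _ => ?_)
    rw [eq_sum y]
    exact add_mem (add_mem (add_mem (T.smul_mem h00 _) (T.smul_mem h01 _)) (T.smul_mem h10 _))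
      (T.smul_mem h11 _)
  constructor
  · intro hm i j hij
    fin_cases i <;> fin_cases j
    · exact absurd rfl hij
    · exact upper_eq_zero hm
    · exact (star_eq_zero (R := K)).1 (upper_eq_zero (star_mem hm))
    · exact absurd rfl hij
  · intro hm
    rw [eq_sum m, hm zero_ne_one, hm one_ne_zero, zero_smul, zero_smul, add_zero, add_zero]
    exact add_mem (T.smul_mem h00 _) (T.smul_mem h11 _)

end MatrixUnits

section Main

variable {A : Type*} [CStarAlgebra A] {S : StarSubalgebra ℂ A}

lemma IsMinimalProjection.exists_mul_mul_one_sub_ne_zero {p : A} (hp : IsMinimalProjection p)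
    (hq : IsMinimalProjection (1 - p)) (hpS : p ∈ S) (hne : S ≠ ⊤) :
    ∃ w, p * w * (1 - p) ≠ 0 := by
  by_contra! hcon
  refine hne (eq_top_iff.2 fun x _ => ?_)
  have hlower : (1 - p) * x * p = 0 := by
    have := congrArg star (hcon (star x))
    rwa [star_mul, star_mul, star_star, hp.isSelfAdjoint.star_eq, hq.isSelfAdjoint.star_eq,
      star_zero, ← mul_assoc] at this
  obtain ⟨a, ha⟩ := hp.exists_smul_eq x
  obtain ⟨d, hd⟩ := hq.exists_smul_eq x
  have hx : x = a • p + d • (1 - p) := by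
    calc x = p * x * p + p * x * (1 - p) + (1 - p) * x * p + (1 - p) * x * (1 - p) := by
          noncomm_ring
      _ = a • p + d • (1 - p) := by rw [hcon, hlower, add_zero, add_zero, ha, hd]
  rw [hx]
  exact add_mem (S.smul_mem hpS a) (S.smul_mem (sub_mem (one_mem S) hpS) d)

theorem IsMinimalProjection.exists_starAlgEquiv {p : A} (hp : IsMinimalProjection p)
    (hq : IsMinimalProjection (1 - p)) (hpS : p ∈ S) (hne : S ≠ ⊤) :
    ∃ φ : A ≃⋆ₐ[ℂ] Matrix (Fin 2) (Fin 2) ℂ, ∀ m, φ.symm m ∈ S ↔ m.IsDiag := by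
  obtain ⟨w, hw⟩ := hp.exists_mul_mul_one_sub_ne_zero hq hpS hne
  obtain ⟨v, rfl, hvq⟩ := hp.exists_mul_star_eq hq hw
  have hvv : v * star v + star v * v = 1 := by rw [hvq, add_sub_cancel]
  have hv : v * v = 0 := by
    refine (CStarRing.star_mul_self_eq_zero_iff _).1 ?_
    calc star (v * v) * (v * v) = star v * (star v * v) * v := by simp only [star_mul, mul_assoc]
      _ = star v * (1 - v * star v) * v := by rw [hvq]
      _ = star v * v - star v * v * (star v * v) := by noncomm_ring
      _ = 0 := by rw [hvq, hq.isIdempotentElem.eq, sub_self]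
  have : Nontrivial A := ⟨_, _, hp.ne_zero⟩
  let ψ : Matrix (Fin 2) (Fin 2) ℂ ≃⋆ₐ[ℂ] A :=
    .ofBijective (matrixUnitsHom v hv hvv) (matrixUnitsHom_bijective hv hvv hp.exists_smul_eq)
  refine ⟨ψ.symm, mem_iff_isDiag_of_ne_top (T := S.comap (matrixUnitsHom v hv hvv)) ?_ ?_⟩
  · rwa [StarSubalgebra.mem_comap, matrixUnitsHom_single_zero_zero]
  · refine fun htop => hne (eq_top_iff.2 fun x _ => ?_)
    obtain ⟨m, rfl⟩ := ψ.surjective x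
    exact htop.ge (Set.mem_univ m)

end Main

/-- Let `A` be a unital C*-algebra and `B` a nonzero norm-closed
*-subalgebra of `A` which is a Chebyshev subspace of `A`. Then `B = A`, or
`B = ℂ·1`, or there is a *-algebra isomorphism `φ : A ≃ M₂(ℂ)` carrying `B` onto
the diagonal matrices. -/
theorem cebysev_subalgebra_trichotomy
    {A : Type*} [NormedRing A] [StarRing A] [CStarRing A]
    [NormedAlgebra ℂ A] [StarModule ℂ A] [CompleteSpace A]
    (B : NonUnitalStarSubalgebra ℂ A) (hBclosed : IsClosed (B : Set A))
    (hB0 : B ≠ ⊥)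
    (hCheb : ∀ x : A, ∃! v : A, v ∈ B ∧ ‖x - v‖ = Metric.infDist x (B : Set A)) :
    B = ⊤ ∨
    (B : Set A) = Set.range (fun c : ℂ => c • (1 : A)) ∨
    ∃ φ : A ≃⋆ₐ[ℂ] Matrix (Fin 2) (Fin 2) ℂ,
      φ '' (B : Set A) = {m : Matrix (Fin 2) (Fin 2) ℂ | ∀ i j, i ≠ j → m i j = 0} := by
  let _ : CStarAlgebra A := {}
  obtain ⟨b, hb, hb0⟩ : ∃ b ∈ B, b ≠ 0 := by
    by_contra! h
    exact hB0 (eq_bot_iff.2 fun b hb => NonUnitalStarAlgebra.mem_bot.2 (h b hb))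
  let S := B.toStarSubalgebra (IsChebyshev.one_mem hCheb hb hb0)
  have hS : IsChebyshev (S : Set A) := hCheb
  by_cases htop : S = ⊤
  · exact .inl (eq_top_iff.2 fun x _ => htop.ge (Set.mem_univ x))
  by_cases hbot : S = ⊥
  · refine .inr (.inl ((congrArg SetLike.coe hbot).trans ?_))
    simp only [StarSubalgebra.coe_bot, Algebra.algebraMap_eq_smul_one']
  obtain ⟨p, hpS, hp, hp0, hp1⟩ := hS.exists_isStarProjection_ne_zero_ne_one htop hbot
  obtain ⟨φ, hφ⟩ := (hS.isMinimalProjection htop hpS hp hp0 hp1).exists_starAlgEquiv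
    (hS.isMinimalProjection htop (sub_mem (one_mem S) hpS) hp.one_sub (sub_ne_zero.2 hp1.symm)
      (by simpa)) hpS htop
  exact .inr (.inr ⟨φ, (φ.toEquiv.image_eq_preimage_symm _).trans (Set.ext hφ)⟩)
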